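/- arXiv:2301.05811 — 3 statements merged into one kernel-verified Lean document; each statement's English description precedes it below -/
import Mathlib

section
/- Let n be a positive integer, let A and B be nonempty subsets of {1,...,n}, and let (h(j))_{j=1}^{n} be independent random variables, each uniformly distributed on the interval [0,1]. Then the probability that min_{j∈A} h(j) = min_{j∈B} h(j) is exactly |A∩B| / |A∪B|. -/
open MeasureTheory Finset
open scoped ENNReal

/-- The product measure on `Fin n → ℝ` in which each coordinate is an independent
uniform random variable on `[0,1]`: a uniform hash family on `{1,...,n}`. -/
noncomputable def uniformHash (J : Type*) [Fintype J] : Measure (J → ℝ) :=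
  Measure.pi fun _ : J => (volume : Measure ℝ).restrict (Set.Icc 0 1)

lemma uh_ae_inj (n : ℕ) : ∀ᵐ h ∂(uniformHash (Fin n)), Function.Injective h := by
  have key : ∀ i j : Fin n, ∀ᵐ h ∂(uniformHash (Fin n)), h i = h j → i = j := by
    intro i j
    by_cases hij : i = j
    · simp [hij]
    have hac : uniformHash (Fin n) ≪ (volume : Measure (Fin n → ℝ)) := by
      unfold uniformHash
      rw [← Measure.restrict_pi_pi, volume_pi]
      exact Measure.absolutelyContinuous_of_le Measure.restrict_le_self
    apply hac.ae_le
    let S : Submodule ℝ (Fin n → ℝ) :=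
      LinearMap.ker ((LinearMap.proj i : (Fin n → ℝ) →ₗ[ℝ] ℝ) - LinearMap.proj j)
    have hS : S ≠ ⊤ := by
      intro h
      have h1 : (Pi.single i 1 : Fin n → ℝ) ∈ S := by rw [h]; trivial
      have hji : j ≠ i := fun h => hij h.symm
      simp [S, LinearMap.mem_ker, Pi.single_apply, hji] at h1
    have h0 := Measure.addHaar_submodule (volume : Measure (Fin n → ℝ)) S hS
    have h2 : ∀ᵐ h ∂(volume : Measure (Fin n → ℝ)), h ∉ S := measure_eq_zero_iff_ae_notMem.mp h0
    filter_upwards [h2] with h hh he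
    exact absurd (by simp [S, LinearMap.mem_ker, he]) hh
  have := ae_all_iff.mpr fun i => ae_all_iff.mpr (key i)
  filter_upwards [this] with h hh i j e using hh i j e

/-- `i` is the strict minimizer over `U`. -/
def uhE {n : ℕ} (U : Finset (Fin n)) (i : Fin n) : Set (Fin n → ℝ) :=
  {h | ∀ j ∈ U, j ≠ i → h i < h j}

lemma uhE_meas {n : ℕ} (U : Finset (Fin n)) (i : Fin n) : MeasurableSet (uhE U i) := by
  have : uhE U i = ⋂ j ∈ U, ⋂ _ : j ≠ i, {h | h i < h j} := by
    ext h; simp [uhE]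
  rw [this]
  refine Finset.measurableSet_biInter _ fun j _ => MeasurableSet.iInter fun _ => ?_
  exact measurableSet_lt (measurable_pi_apply i) (measurable_pi_apply j)

lemma uhE_swap {n : ℕ} (U : Finset (Fin n)) {i k : Fin n} (hi : i ∈ U) (hk : k ∈ U) :
    uniformHash (Fin n) (uhE U i) = uniformHash (Fin n) (uhE U k) := by
  have mp := measurePreserving_piCongrLeft
    (fun _ : Fin n => (volume : Measure ℝ).restrict (Set.Icc 0 1)) (Equiv.swap i k)
  have h1 := mp.measure_preimage (uhE_meas U i).nullMeasurableSet
  have h2 : (MeasurableEquiv.piCongrLeft (fun _ : Fin n => ℝ) (Equiv.swap i k)) ⁻¹' (uhE U i)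
      = uhE U k := by
    ext h
    have e : ∀ j, (MeasurableEquiv.piCongrLeft (fun _ : Fin n => ℝ) (Equiv.swap i k)) h j
        = h (Equiv.swap i k j) := by
      intro j
      have := MeasurableEquiv.piCongrLeft_apply_apply (Equiv.swap i k) (β := fun _ => ℝ) h
        (Equiv.swap i k j)
      simpa using this
    have hmem : ∀ j ∈ U, Equiv.swap i k j ∈ U := by
      intro j hj
      rw [Equiv.swap_apply_def]; split_ifs <;> assumption
    simp only [uhE, Set.mem_preimage, Set.mem_setOf_eq, e, Equiv.swap_apply_left]
    constructor
    · intro H j hj hne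
      have := H (Equiv.swap i k j) (hmem j hj) (by
        intro h'
        apply hne
        have := congrArg (Equiv.swap i k) h'
        simpa using this)
      simpa using this
    · intro H j hj hne
      refine H _ (hmem j hj) ?_
      intro h'
      apply hne
      have := congrArg (Equiv.swap i k) h'
      simpa using this
  rw [h2] at h1
  exact h1.symm

lemma uhE_disj {n : ℕ} (U V : Finset (Fin n)) (hV : V ⊆ U) :
    Set.PairwiseDisjoint (V : Set (Fin n)) (uhE U) := by
  intro i hi k hk hne
  rw [Function.onFun, Set.disjoint_left]
  intro h h1 h2
  exact lt_asymm (h1 k (hV hk) hne.symm) (h2 i (hV hi) hne)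

lemma uh_exists {n : ℕ} (U : Finset (Fin n)) (hU : U.Nonempty) (h : Fin n → ℝ)
    (hh : Function.Injective h) : ∃ i ∈ U, h ∈ uhE U i := by
  obtain ⟨i, hi, hm⟩ := U.exists_min_image h hU
  exact ⟨i, hi, fun j hj hne => lt_of_le_of_ne (hm j hj) fun e => hne (hh e).symm⟩

lemma uhE_val {n : ℕ} (U : Finset (Fin n)) {i : Fin n} (hi : i ∈ U) :
    uniformHash (Fin n) (uhE U i) = (U.card : ℝ≥0∞)⁻¹ := by
  have h1 : uniformHash (Fin n) (⋃ k ∈ U, uhE U k) = 1 := by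
    have hu : uniformHash (Fin n) Set.univ = 1 := by
      simp [uniformHash, Measure.pi_univ]
    rw [← hu]
    apply measure_congr
    filter_upwards [uh_ae_inj n] with h hh
    apply propext
    refine iff_of_true ?_ trivial
    obtain ⟨k, hk, hm⟩ := uh_exists U ⟨i, hi⟩ h hh
    exact Set.mem_biUnion hk hm
  rw [measure_biUnion_finset (uhE_disj U U subset_rfl) (fun k _ => uhE_meas U k),
    Finset.sum_congr rfl (fun k hk => uhE_swap U hk hi), Finset.sum_const, nsmul_eq_mul] at h1
  rw [mul_comm] at h1
  exact ENNReal.eq_inv_of_mul_eq_one_left h1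

/-- If `A` and `B` are nonempty subsets of `{1,...,n}` and `(h j)_{j}` are independent
uniform random variables on `[0,1]`, then the probability that
`min_{j ∈ A} h j = min_{j ∈ B} h j` is exactly `|A ∩ B| / |A ∪ B|`. -/
theorem minhash_collision_probability (n : ℕ) (hn : 0 < n)
    (A B : Finset (Fin n)) (hA : A.Nonempty) (hB : B.Nonempty) :
    uniformHash (Fin n) {h : Fin n → ℝ | A.inf' hA h = B.inf' hB h}
      = ((A ∩ B).card : ℝ≥0∞) / ((A ∪ B).card : ℝ≥0∞) := by
  classical
  have hev : uniformHash (Fin n) {h : Fin n → ℝ | A.inf' hA h = B.inf' hB h}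
      = uniformHash (Fin n) (⋃ k ∈ A ∩ B, uhE (A ∪ B) k) := by
    apply measure_congr
    filter_upwards [uh_ae_inj n] with h hh
    apply propext
    change A.inf' hA h = B.inf' hB h ↔ h ∈ ⋃ k ∈ A ∩ B, uhE (A ∪ B) k
    simp only [Set.mem_iUnion, exists_prop]
    constructor
    · intro he
      obtain ⟨a, ha, hae⟩ := A.exists_mem_eq_inf' hA h
      obtain ⟨b, hb, hbe⟩ := B.exists_mem_eq_inf' hB h
      have hab : a = b := hh (by rw [← hae, ← hbe, he])
      subst hab
      refine ⟨a, Finset.mem_inter.mpr ⟨ha, hb⟩, fun j hj hne => ?_⟩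
      refine lt_of_le_of_ne ?_ fun e => hne (hh e).symm
      rcases Finset.mem_union.mp hj with hj | hj
      · rw [← hae]; exact Finset.inf'_le _ hj
      · rw [← hbe]; exact Finset.inf'_le _ hj
    · rintro ⟨k, hk, hm⟩
      have hk' := Finset.mem_inter.mp hk
      have hle : ∀ j ∈ A ∪ B, h k ≤ h j := by
        intro j hj
        by_cases e : j = k
        · rw [e]
        · exact (hm j hj e).le
      have e1 : A.inf' hA h = h k := le_antisymm (Finset.inf'_le _ hk'.1)
        (Finset.le_inf' _ _ fun j hj => hle j (Finset.mem_union_left _ hj))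
      have e2 : B.inf' hB h = h k := le_antisymm (Finset.inf'_le _ hk'.2)
        (Finset.le_inf' _ _ fun j hj => hle j (Finset.mem_union_right _ hj))
      rw [e1, e2]
  have hsub : A ∩ B ⊆ A ∪ B := fun x hx => Finset.mem_union_left _ (Finset.mem_inter.mp hx).1
  rw [hev, measure_biUnion_finset (uhE_disj _ _ hsub) (fun k _ => uhE_meas _ k),
    Finset.sum_congr rfl (fun k hk => uhE_val (A ∪ B) (hsub hk)), Finset.sum_const, nsmul_eq_mul,
    div_eq_mul_inv]
end

section
/- There is an absolute constant C > 0 such that the following holds. Let n be a positive integer, let S be a nonempty subset of {1,...,n}, let ε, δ ∈ (0,1), and let m be an integer with m ≥ C/(δ·ε²). Let h¹,...,hᵐ be mutually independent uniform hash families on {1,...,n}. Define the estimator Ũ = m / (∑_{i=1}^{m} min_{j∈S} hⁱ(j)) − 1. Then with probability at least 1−δ, (1−ε)·|S| ≤ Ũ ≤ (1+ε)·|S|. -/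
open MeasureTheory Finset
open scoped ENNReal

/-- `m` mutually independent uniform hash families on `J`. -/
noncomputable def hashFamilies (m : ℕ) (J : Type*) [Fintype J] :
    Measure (Fin m → J → ℝ) :=
  Measure.pi fun _ : Fin m => uniformHash J

instance unifHash_prob (J : Type*) [Fintype J] : IsProbabilityMeasure (uniformHash J) := by
  have : IsProbabilityMeasure ((volume : Measure ℝ).restrict (Set.Icc 0 1)) :=
    ⟨by simp⟩
  unfold uniformHash
  infer_instance

lemma hash_ge_set {n : ℕ} (S : Finset (Fin n)) (hS : S.Nonempty) (t : ℝ) :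
    {h : Fin n → ℝ | t ≤ S.inf' hS h} =
      Set.pi Set.univ (fun j => if j ∈ S then Set.Ici t else Set.univ) := by
  ext h
  simp only [Set.mem_ofPred_eq, Finset.le_inf'_iff, Set.mem_pi, Set.mem_univ, true_implies]
  refine forall_congr' fun j => ?_
  by_cases hj : j ∈ S <;> simp [hj]

lemma hash_min_measurable {n : ℕ} (S : Finset (Fin n)) (hS : S.Nonempty) :
    Measurable (fun h : Fin n → ℝ => S.inf' hS h) := by
  refine measurable_of_Ici fun t => ?_
  have := hash_ge_set S hS t
  change MeasurableSet {h : Fin n → ℝ | t ≤ S.inf' hS h}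
  rw [this]
  refine MeasurableSet.univ_pi fun j => ?_
  split_ifs
  · exact measurableSet_Ici
  · exact MeasurableSet.univ

lemma hash_tail {n : ℕ} (S : Finset (Fin n)) (hS : S.Nonempty) (t : ℝ) (ht : 0 < t) :
    uniformHash (Fin n) {h | t ≤ S.inf' hS h} = ENNReal.ofReal (1 - t) ^ S.card := by
  rw [hash_ge_set, uniformHash, Measure.pi_pi]
  have : ∀ j : Fin n, (volume : Measure ℝ).restrict (Set.Icc 0 1)
      (if j ∈ S then Set.Ici t else Set.univ) = if j ∈ S then ENNReal.ofReal (1 - t) else 1 := by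
    intro j
    by_cases hj : j ∈ S
    · simp only [hj, if_true]
      rw [Measure.restrict_apply measurableSet_Ici]
      have : Set.Ici t ∩ Set.Icc 0 1 = Set.Icc t 1 := by
        ext x; simp only [Set.mem_inter_iff, Set.mem_Ici, Set.mem_Icc]
        constructor
        · rintro ⟨a, b, c⟩; exact ⟨a, c⟩
        · rintro ⟨a, c⟩; exact ⟨a, by linarith, c⟩
      rw [this, Real.volume_Icc]
    · simp [hj]
  simp_rw [this]
  rw [Finset.prod_ite_mem]
  simp

lemma hash_ae {n : ℕ} : ∀ᵐ h ∂(uniformHash (Fin n)), ∀ j, h j ∈ Set.Icc (0:ℝ) 1 := by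
  rw [ae_all_iff]
  intro j
  have h0 : ∀ᵐ x ∂((volume : Measure ℝ).restrict (Set.Icc 0 1)), x ∈ Set.Icc (0:ℝ) 1 :=
    ae_restrict_mem measurableSet_Icc
  unfold uniformHash
  exact (Measure.quasiMeasurePreserving_eval
    (fun _ : Fin n => (volume : Measure ℝ).restrict (Set.Icc 0 1)) j).ae h0

lemma hash_min_ae {n : ℕ} (S : Finset (Fin n)) (hS : S.Nonempty) :
    ∀ᵐ h ∂(uniformHash (Fin n)), S.inf' hS h ∈ Set.Icc (0:ℝ) 1 := by
  filter_upwards [hash_ae] with h hh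
  obtain ⟨j, hj⟩ := hS
  refine ⟨(Finset.le_inf'_iff _ _).2 fun i _ => (hh i).1, ?_⟩
  exact (Finset.inf'_le _ hj).trans (hh j).2

lemma hash_moment {n : ℕ} (S : Finset (Fin n)) (hS : S.Nonempty) (g : ℝ → ℝ)
    (hg : Continuous g) (hg0 : ∀ t, 0 < t → 0 ≤ g t) :
    ∫ h, (∫ t in (0:ℝ)..S.inf' hS h, g t) ∂(uniformHash (Fin n)) =
      ∫ t in (0:ℝ)..1, (1 - t) ^ S.card * g t := by
  have hX := hash_min_measurable S hS
  have hG : Continuous (fun x : ℝ => ∫ t in (0:ℝ)..x, g t) :=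
    intervalIntegral.continuous_primitive (fun a b => hg.intervalIntegrable a b) 0
  have key := lintegral_comp_eq_lintegral_meas_le_mul (uniformHash (Fin n))
    (f := fun h => S.inf' hS h) (g := g)
    ((hash_min_ae S hS).mono fun h hh => hh.1) hX.aemeasurable
    (fun t _ => hg.intervalIntegrable 0 t)
    ((ae_restrict_mem measurableSet_Ioi).mono fun t ht => hg0 t ht)
  rw [integral_eq_lintegral_of_nonneg_ae, key, intervalIntegral.integral_of_le zero_le_one,
    integral_eq_lintegral_of_nonneg_ae]
  · congr 1
    rw [← lintegral_indicator measurableSet_Ioi, ← lintegral_indicator measurableSet_Ioc]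
    congr 1
    ext t
    by_cases h0 : 0 < t
    · by_cases h1 : t ≤ 1
      · rw [Set.indicator_of_mem (by exact h0), Set.indicator_of_mem (by exact ⟨h0, h1⟩),
          hash_tail S hS t h0, ENNReal.ofReal_mul (by apply pow_nonneg; linarith),
          ENNReal.ofReal_pow (by linarith)]
      · rw [Set.indicator_of_mem (by exact h0), Set.indicator_of_notMem (by simp [h1]),
          hash_tail S hS t h0, ENNReal.ofReal_of_nonpos (by linarith),
          zero_pow hS.card_pos.ne', zero_mul]
    · rw [Set.indicator_of_notMem (by simpa using h0),
        Set.indicator_of_notMem (by simp; intro h; exact absurd h h0)]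
  · refine (ae_restrict_mem measurableSet_Ioc).mono fun t ht => ?_
    exact mul_nonneg (pow_nonneg (by linarith [ht.2]) _) (hg0 t ht.1)
  · exact (by fun_prop : Continuous fun t : ℝ => (1 - t) ^ S.card * g t).aestronglyMeasurable
  · refine (hash_min_ae S hS).mono fun h hh => ?_
    refine intervalIntegral.integral_nonneg_of_ae_restrict hh.1 ?_
    rw [← restrict_Ioc_eq_restrict_Icc]
    exact (ae_restrict_mem measurableSet_Ioc).mono fun t ht => hg0 t ht.1
  · exact (hG.measurable.comp hX).aestronglyMeasurable

lemma hash_mean {n : ℕ} (S : Finset (Fin n)) (hS : S.Nonempty) :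
    ∫ h, S.inf' hS h ∂(uniformHash (Fin n)) = 1 / ((S.card : ℝ) + 1) := by
  have := hash_moment S hS (fun _ => 1) continuous_const (fun _ _ => zero_le_one)
  simp only [intervalIntegral.integral_const, smul_eq_mul, mul_one, sub_zero] at this
  rw [this, intervalIntegral.integral_comp_sub_left (fun t : ℝ => t ^ S.card) 1]
  simp

lemma hash_second {n : ℕ} (S : Finset (Fin n)) (hS : S.Nonempty) :
    ∫ h, (S.inf' hS h) ^ 2 ∂(uniformHash (Fin n)) =
      2 / (((S.card : ℝ) + 1) * ((S.card : ℝ) + 2)) := by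
  have := hash_moment S hS (fun t => 2 * t) (by fun_prop) (fun _ _ => by positivity)
  have e : ∀ x : ℝ, (∫ t in (0:ℝ)..x, 2 * t) = x ^ 2 := by
    intro x; rw [intervalIntegral.integral_const_mul, integral_id]; ring
  simp only [e] at this
  have e2 : ∀ t : ℝ, (1 - t) ^ S.card * (2 * t) =
      (fun u : ℝ => 2 * u ^ S.card - 2 * u ^ (S.card + 1)) (1 - t) := by
    intro t; beta_reduce; ring
  rw [this, intervalIntegral.integral_congr (fun t _ => e2 t), intervalIntegral.integral_comp_sub_left
    (fun u : ℝ => 2 * u ^ S.card - 2 * u ^ (S.card + 1)) 1, intervalIntegral.integral_sub]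
  · simp only [intervalIntegral.integral_const_mul, integral_pow]
    push_cast
    have : (S.card : ℝ) + 1 ≠ 0 := by positivity
    have : (S.card : ℝ) + 2 ≠ 0 := by positivity
    have : (S.card : ℝ) + 1 + 1 ≠ 0 := by positivity
    simp
    field_simp
    ring
  · exact Continuous.intervalIntegrable (by fun_prop) _ _
  · exact Continuous.intervalIntegrable (by fun_prop) _ _

lemma hash_memLp {n : ℕ} (S : Finset (Fin n)) (hS : S.Nonempty) :
    MemLp (fun h : Fin n → ℝ => S.inf' hS h) 2 (uniformHash (Fin n)) := by
  refine MemLp.of_bound (hash_min_measurable S hS).aestronglyMeasurable 1 ?_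
  refine (hash_min_ae S hS).mono fun h hh => ?_
  rw [Real.norm_eq_abs, abs_le]
  exact ⟨by linarith [hh.1], hh.2⟩

lemma hash_var {n : ℕ} (S : Finset (Fin n)) (hS : S.Nonempty) :
    ProbabilityTheory.variance (fun h : Fin n → ℝ => S.inf' hS h) (uniformHash (Fin n)) ≤
      1 / ((S.card : ℝ) + 1) ^ 2 := by
  rw [ProbabilityTheory.variance_eq_sub (hash_memLp S hS)]
  have := hash_second S hS
  simp only [Pi.pow_apply, this, hash_mean S hS]
  have h1 : (0:ℝ) < (S.card : ℝ) + 1 := by positivity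
  have : 2 / (((S.card : ℝ) + 1) * ((S.card : ℝ) + 2)) ≤ 2 / ((S.card : ℝ) + 1) ^ 2 := by
    gcongr; nlinarith
  rw [div_pow, one_pow]
  have e : 2 / ((S.card : ℝ) + 1) ^ 2 = 1 / ((S.card : ℝ) + 1) ^ 2 + 1 / ((S.card : ℝ) + 1) ^ 2 := by
    ring
  linarith

lemma hash_arith (k m Y ε : ℝ) (hk : 1 ≤ k) (hm : 0 < m) (h0 : 0 < ε) (h1 : ε < 1)
    (h : |Y - m / (k + 1)| < ε / 4 * (m / (k + 1))) :
    (1 - ε) * k ≤ m / Y - 1 ∧ m / Y - 1 ≤ (1 + ε) * k := by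
  set a := m / (k + 1) with ha
  have hk1 : 0 < k + 1 := by linarith
  have hapos : 0 < a := by positivity
  have hma : m = a * (k + 1) := by rw [ha]; field_simp
  rw [abs_lt] at h
  have hY : 0 < Y := by nlinarith
  have hY1 : Y ≤ (1 + ε / 4) * a := by linarith
  have hY2 : (1 - ε / 4) * a ≤ Y := by linarith
  constructor
  · have : (1 - ε) * k + 1 ≤ m / Y := by
      rw [le_div_iff₀ hY, hma]
      have p : (1 - ε) * k + 1 ≤ (1 - ε / 2) * (k + 1) := by nlinarith
      have q : (1 - ε / 2) * (1 + ε / 4) ≤ 1 := by nlinarith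
      calc ((1 - ε) * k + 1) * Y ≤ ((1 - ε / 2) * (k + 1)) * ((1 + ε / 4) * a) := by
            apply mul_le_mul p hY1 hY.le
            apply mul_nonneg <;> linarith
        _ = ((1 - ε / 2) * (1 + ε / 4)) * (a * (k + 1)) := by ring
        _ ≤ 1 * (a * (k + 1)) := by gcongr
        _ = _ := one_mul _
    linarith
  · have : m / Y ≤ (1 + ε) * k + 1 := by
      rw [div_le_iff₀ hY, hma]
      have p : (1 + ε / 2) * (k + 1) ≤ (1 + ε) * k + 1 := by nlinarith
      have q : 1 ≤ (1 + ε / 2) * (1 - ε / 4) := by nlinarith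
      calc a * (k + 1) = 1 * (a * (k + 1)) := (one_mul _).symm
        _ ≤ ((1 + ε / 2) * (1 - ε / 4)) * (a * (k + 1)) := by gcongr
        _ = ((1 + ε / 2) * (k + 1)) * ((1 - ε / 4) * a) := by ring
        _ ≤ ((1 + ε) * k + 1) * Y := by
            apply mul_le_mul p hY2
            · apply mul_nonneg <;> linarith
            · positivity
    linarith

/-- Union size (distinct elements) estimator: there is an absolute constant `C > 0` such
that for any nonempty `S ⊆ {1,...,n}`, `ε, δ ∈ (0,1)`, and integer `m ≥ C / (δ ε²)`, with
`h¹, ..., hᵐ` mutually independent uniform hash families on `{1,...,n}`, the estimator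
`Ũ = m / (∑ i, min_{j ∈ S} hⁱ j) - 1` satisfies
`(1-ε)|S| ≤ Ũ ≤ (1+ε)|S|` with probability at least `1 - δ`. -/
theorem union_size_estimator :
    ∃ C : ℝ, 0 < C ∧
      ∀ (n : ℕ), 0 < n →
      ∀ (S : Finset (Fin n)) (hS : S.Nonempty) (ε δ : ℝ),
        ε ∈ Set.Ioo (0 : ℝ) 1 → δ ∈ Set.Ioo (0 : ℝ) 1 →
        ∀ m : ℕ, C / (δ * ε ^ 2) ≤ (m : ℝ) →
          ENNReal.ofReal (1 - δ) ≤
            hashFamilies m (Fin n)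
              {H : Fin m → Fin n → ℝ |
                (1 - ε) * (S.card : ℝ) ≤ (m : ℝ) / (∑ i, S.inf' hS (H i)) - 1 ∧
                (m : ℝ) / (∑ i, S.inf' hS (H i)) - 1 ≤ (1 + ε) * (S.card : ℝ)} := by
  refine ⟨16, by norm_num, ?_⟩
  intro n _ S hS ε δ hε hδ m hm
  have hk : (1:ℝ) ≤ S.card := by exact_mod_cast hS.card_pos
  obtain ⟨hε0, hε1⟩ := hε
  obtain ⟨hδ0, hδ1⟩ := hδ
  have hm0 : (0:ℝ) < m := lt_of_lt_of_le (by positivity) hm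
  have : IsProbabilityMeasure (hashFamilies m (Fin n)) := by
    unfold hashFamilies; infer_instance
  let X : (Fin n → ℝ) → ℝ := fun h => S.inf' hS h
  let Y : (Fin m → Fin n → ℝ) → ℝ := ∑ i, fun H => X (H i)
  have hXm : MemLp X 2 (uniformHash (Fin n)) := hash_memLp S hS
  have hXi : ∀ i : Fin m, MemLp (fun H : Fin m → Fin n → ℝ => X (H i)) 2
      (hashFamilies m (Fin n)) := fun i =>
    hXm.comp_measurePreserving (measurePreserving_eval (fun _ : Fin m => uniformHash (Fin n)) i)
  have hYm : MemLp Y 2 (hashFamilies m (Fin n)) := memLp_finsetSum' _ fun i _ => hXi i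
  have hYv : ProbabilityTheory.variance Y (hashFamilies m (Fin n)) ≤
      m * (1 / ((S.card : ℝ) + 1) ^ 2) := by
    have := ProbabilityTheory.variance_sum_pi (μ := fun _ : Fin m => uniformHash (Fin n))
      (X := fun _ => X) (fun _ => hXm)
    change ProbabilityTheory.variance Y (hashFamilies m (Fin n)) = _ at this
    rw [this]
    simp only [Finset.sum_const, Finset.card_univ, Fintype.card_fin, nsmul_eq_mul]
    exact mul_le_mul_of_nonneg_left (hash_var S hS) hm0.le
  have hYe : ∫ H, Y H ∂(hashFamilies m (Fin n)) = m / ((S.card : ℝ) + 1) := by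
    simp only [Y, Finset.sum_apply]
    rw [integral_finsetSum _ fun i _ => (hXi i).integrable one_le_two]
    have : ∀ i : Fin m, ∫ H, X (H i) ∂(hashFamilies m (Fin n)) = 1 / ((S.card : ℝ) + 1) := by
      intro i
      rw [← hash_mean S hS]
      exact integral_comp_eval (μ := fun _ : Fin m => uniformHash (Fin n)) hXm.1
    simp only [this, Finset.sum_const, Finset.card_univ, Fintype.card_fin, nsmul_eq_mul]
    ring
  have hc : 0 < ε / 4 * (m / ((S.card : ℝ) + 1)) := by positivity
  have cheb := ProbabilityTheory.meas_ge_le_variance_div_sq hYm hc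
  rw [hYe] at cheb
  set B := {H | ε / 4 * (m / ((S.card : ℝ) + 1)) ≤ |Y H - m / ((S.card : ℝ) + 1)|} with hB
  have hYmeas : Measurable Y := by
    have hi : ∀ i : Fin m, Measurable (fun H : Fin m → Fin n → ℝ => X (H i)) := fun i =>
      (hash_min_measurable S hS).comp (measurable_pi_apply i)
    have h2 : Measurable (fun H : Fin m → Fin n → ℝ => ∑ i, X (H i)) := by fun_prop
    have e : Y = fun H => ∑ i, X (H i) := by ext H; simp [Y]
    rw [e]; exact h2
  have hBm : MeasurableSet B := measurableSet_le measurable_const (hYmeas.sub_const _).abs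
  have hBδ : hashFamilies m (Fin n) B ≤ ENNReal.ofReal δ := by
    refine cheb.trans (ENNReal.ofReal_le_ofReal ?_)
    rw [div_le_iff₀ (by positivity)]
    refine hYv.trans ?_
    rw [div_le_iff₀ (by positivity)] at hm
    have e : δ * (ε / 4 * (m / ((S.card : ℝ) + 1))) ^ 2 =
      (m * (δ * ε ^ 2)) / 16 * (m * (1 / ((S.card : ℝ) + 1) ^ 2)) := by
      field_simp
      ring
    rw [e]
    refine le_mul_of_one_le_left (by positivity) (by linarith)
  calc ENNReal.ofReal (1 - δ) = 1 - ENNReal.ofReal δ := by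
        rw [ENNReal.ofReal_sub _ hδ0.le, ENNReal.ofReal_one]
    _ ≤ 1 - hashFamilies m (Fin n) B := tsub_le_tsub_left hBδ 1
    _ = hashFamilies m (Fin n) Bᶜ := (prob_compl_eq_one_sub hBm).symm
    _ ≤ _ := by
      refine measure_mono fun H hH => ?_
      have hH' : |Y H - m / ((S.card : ℝ) + 1)| < ε / 4 * (m / ((S.card : ℝ) + 1)) := by
        simpa [hB] using hH
      have := hash_arith _ _ _ _ hk hm0 hε0 hε1 hH'
      simp only [Y, Finset.sum_apply] at this
      exact this
end

section
/- Let a, b ∈ ℝⁿ be vectors with nonempty supports A = supp(a) and B = supp(b), all of whose entries are bounded in absolute value by c > 0, and let (h(j))_{j=1}^{n} be independent random variables, each uniformly distributed on [0,1]. Let j_A be the (almost surely unique) minimizer of h over A and j_B the minimizer of h over B, and define Z = 1[h(j_A) = h(j_B)] · a[j_A] · b[j_B]. Then E[Z²] = (∑_{j∈A∩B} a[j]²·b[j]²) / |A∪B|, and consequently Var[Z] ≤ c⁴ · |A∩B| / |A∪B|. -/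
open MeasureTheory Finset
open scoped ENNReal


/-- The support `{i : x i ≠ 0}` of a vector, as a `Finset`. -/
noncomputable def supp {n : ℕ} (x : Fin n → ℝ) : Finset (Fin n) :=
  Finset.univ.filter fun i => x i ≠ 0

/-- A minimizer of `f` over the nonempty finite set `s` (the minimizer of a uniform
hash family over a nonempty set is almost surely unique). -/
noncomputable def argminOn {α : Type*} (s : Finset α) (hs : s.Nonempty) (f : α → ℝ) : α :=
  (s.exists_min_image f hs).choose

/-- The MinHash random variable `Z = 1[h(j_A) = h(j_B)] ⬝ a[j_A] ⬝ b[j_B]`, where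
`j_A` and `j_B` are the minimizers of the hash `h` over `A` and `B` respectively. -/
noncomputable def Zuw {n : ℕ} (a b : Fin n → ℝ) (A B : Finset (Fin n))
    (hA : A.Nonempty) (hB : B.Nonempty) (h : Fin n → ℝ) : ℝ :=
  (if h (argminOn A hA h) = h (argminOn B hB h) then (1 : ℝ) else 0) *
    a (argminOn A hA h) * b (argminOn B hB h)

def EvMin {n : ℕ} (U : Finset (Fin n)) (j : Fin n) : Set (Fin n → ℝ) :=
  {h | ∀ i ∈ U, h j ≤ h i}

lemma measurableSet_EvMin {n : ℕ} (U : Finset (Fin n)) (j : Fin n) :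
    MeasurableSet (EvMin U j) := by
  have : EvMin U j = ⋂ i ∈ U, {h : Fin n → ℝ | h j ≤ h i} := by
    ext h; simp [EvMin]
  rw [this]
  exact Finset.measurableSet_biInter _ fun i _ =>
    measurableSet_le (measurable_pi_apply j) (measurable_pi_apply i)

instance isProb_uniformHash {n : ℕ} : IsProbabilityMeasure (uniformHash (Fin n)) := by
  have : IsProbabilityMeasure ((volume : Measure ℝ).restrict (Set.Icc 0 1)) :=
    ⟨by simp⟩
  unfold uniformHash
  infer_instance

lemma ae_injective {n : ℕ} :
    ∀ᵐ h ∂(uniformHash (Fin n)), Function.Injective h := by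
  have key : ∀ i j : Fin n, i ≠ j → ∀ᵐ h ∂(uniformHash (Fin n)), h i ≠ h j := by
    intro i j hij
    unfold uniformHash
    rw [← Measure.restrict_pi_pi]
    apply ae_restrict_of_ae
    change ∀ᵐ h ∂(volume : Measure (Fin n → ℝ)), h i ≠ h j
    rw [ae_iff]
    have := Measure.addHaar_submodule (volume : Measure (Fin n → ℝ))
      (LinearMap.ker (LinearMap.proj (R := ℝ) (φ := fun _ : Fin n => ℝ) i - LinearMap.proj j)) (by
        intro h
        have h2 : (Pi.single i 1 : Fin n → ℝ) ∈ (LinearMap.ker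
          (LinearMap.proj (R := ℝ) (φ := fun _ : Fin n => ℝ) i - LinearMap.proj j)) := by
          rw [h]; trivial
        simp [LinearMap.mem_ker, hij, hij.symm] at h2)
    convert this using 2
    ext h
    simp [LinearMap.mem_ker, sub_eq_zero]
  have : ∀ᵐ h ∂(uniformHash (Fin n)), ∀ i j : Fin n, i ≠ j → h i ≠ h j := by
    rw [ae_all_iff]; intro i
    rw [ae_all_iff]; intro j
    by_cases hij : i = j
    · simp [hij]
    · filter_upwards [key i j hij] with h hh _ using hh
  filter_upwards [this] with h hh i j hij
  by_contra hne
  exact hh i j hne hij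

lemma EvMin_symm {n : ℕ} (U : Finset (Fin n)) {j k : Fin n} (hj : j ∈ U) (hk : k ∈ U) :
    (uniformHash (Fin n)).real (EvMin U j) = (uniformHash (Fin n)).real (EvMin U k) := by
  have hmp := measurePreserving_piCongrLeft
    (fun _ : Fin n => (volume : Measure ℝ).restrict (Set.Icc 0 1)) (Equiv.swap j k)
  have h1 := hmp.measure_preimage (measurableSet_EvMin U k).nullMeasurableSet
  unfold Measure.real
  congr 1
  unfold uniformHash
  rw [← h1]
  congr 1
  ext h
  have hval : ∀ i, (MeasurableEquiv.piCongrLeft (fun _ : Fin n => ℝ) (Equiv.swap j k)) h i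
      = h (Equiv.swap j k i) := by
    intro i
    have := Equiv.piCongrLeft_apply_apply (fun _ : Fin n => ℝ) (Equiv.swap j k) h
      (Equiv.swap j k i)
    rw [Equiv.swap_apply_self] at this
    exact this
  simp only [EvMin, Set.mem_preimage, Set.mem_setOf_eq, hval, Equiv.swap_apply_right]
  have hm : ∀ i ∈ U, Equiv.swap j k i ∈ U := by
    intro i hi
    rw [Equiv.swap_apply_def]
    split_ifs <;> assumption
  constructor
  · intro H i hi
    exact H _ (hm i hi)
  · intro H i hi
    simpa using H _ (hm i hi)

lemma EvMin_prob {n : ℕ} (U : Finset (Fin n)) {j : Fin n} (hj : j ∈ U) :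
    (uniformHash (Fin n)).real (EvMin U j) = 1 / (U.card : ℝ) := by
  have hsum : ∑ k ∈ U, (uniformHash (Fin n)).real (EvMin U k) = 1 := by
    have h1 : ∫ h, ∑ k ∈ U, (EvMin U k).indicator (fun _ => (1:ℝ)) h ∂(uniformHash (Fin n))
        = ∑ k ∈ U, (uniformHash (Fin n)).real (EvMin U k) := by
      rw [integral_finsetSum]
      · refine Finset.sum_congr rfl fun k _ => ?_
        rw [integral_indicator_const _ (measurableSet_EvMin U k)]
        simp
      · intro k _
        exact (integrable_const _).indicator (measurableSet_EvMin U k)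
    rw [← h1]
    have h2 : ∫ h, ∑ k ∈ U, (EvMin U k).indicator (fun _ => (1:ℝ)) h ∂(uniformHash (Fin n))
        = ∫ _, (1:ℝ) ∂(uniformHash (Fin n)) := by
      apply integral_congr_ae
      filter_upwards [ae_injective] with h hh
      obtain ⟨m, hm, hmin⟩ := U.exists_min_image h ⟨j, hj⟩
      rw [Finset.sum_eq_single_of_mem m hm]
      · exact Set.indicator_of_mem (show h ∈ EvMin U m from hmin) _
      · intro k hk hkm
        apply Set.indicator_of_notMem
        intro hmem
        exact hkm (hh (le_antisymm (hmem m hm) (hmin k hk)))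
    rw [h2]; simp
  rw [Finset.sum_congr rfl fun k hk => EvMin_symm U hk hj, Finset.sum_const, nsmul_eq_mul] at hsum
  have : (U.card : ℝ) ≠ 0 := by
    intro h0; rw [h0] at hsum; simp at hsum
  field_simp
  linarith

lemma argminOn_mem {α : Type*} (s : Finset α) (hs : s.Nonempty) (f : α → ℝ) :
    argminOn s hs f ∈ s := (s.exists_min_image f hs).choose_spec.1

lemma argminOn_le {α : Type*} (s : Finset α) (hs : s.Nonempty) (f : α → ℝ) :
    ∀ i ∈ s, f (argminOn s hs f) ≤ f i := (s.exists_min_image f hs).choose_spec.2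

lemma Zuw_eq {n : ℕ} (a b : Fin n → ℝ) (A B : Finset (Fin n))
    (hA : A.Nonempty) (hB : B.Nonempty) (h : Fin n → ℝ) (hh : Function.Injective h)
    (φ : ℝ → ℝ) (h0 : φ 0 = 0) :
    φ (Zuw a b A B hA hB h)
      = ∑ j ∈ A ∩ B, (EvMin (A ∪ B) j).indicator (fun _ => φ (a j * b j)) h := by
  have hAm := argminOn_mem A hA h
  have hAl := argminOn_le A hA h
  have hBm := argminOn_mem B hB h
  have hBl := argminOn_le B hB h
  unfold Zuw
  generalize argminOn A hA h = p at *
  generalize argminOn B hB h = q at *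
  by_cases hpq : h p = h q
  · have hpq' := hh hpq
    subst hpq'
    rw [Finset.sum_eq_single_of_mem p (Finset.mem_inter.2 ⟨hAm, hBm⟩)]
    · rw [Set.indicator_of_mem]
      · simp
      · intro i hi
        rcases Finset.mem_union.1 hi with hi | hi
        · exact hAl i hi
        · exact hBl i hi
    · intro k hk hkp
      apply Set.indicator_of_notMem
      intro hmem
      exact hkp (hh (le_antisymm (hmem p (Finset.mem_union_left _ hAm))
        (hAl k (Finset.mem_inter.1 hk).1)))
  · rw [Finset.sum_eq_zero]
    · simp [hpq, h0]
    · intro k hk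
      apply Set.indicator_of_notMem
      intro hmem
      have hk := Finset.mem_inter.1 hk
      exact hpq ((le_antisymm (hAl k hk.1) (hmem p (Finset.mem_union_left _ hAm))).trans
        (le_antisymm (hmem q (Finset.mem_union_right _ hBm)) (hBl k hk.2)))

/-- For vectors `a, b ∈ ℝⁿ` with nonempty supports `A`, `B`, entries bounded in absolute
value by `c > 0`, and an independent uniform hash family `h` on `{1,...,n}`, the random
variable `Z = 1[h(j_A) = h(j_B)] ⬝ a[j_A] ⬝ b[j_B]` satisfies
`E[Z²] = (∑_{j ∈ A ∩ B} a[j]² b[j]²) / |A ∪ B|` and consequently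
`Var[Z] ≤ c⁴ |A ∩ B| / |A ∪ B|`. -/
theorem minhash_product_second_moment {n : ℕ} (a b : Fin n → ℝ) (c : ℝ) (hc : 0 < c)
    (ha : ∀ i, |a i| ≤ c) (hb : ∀ i, |b i| ≤ c)
    (hA : (supp a).Nonempty) (hB : (supp b).Nonempty) :
    (∫ h, (Zuw a b (supp a) (supp b) hA hB h) ^ 2 ∂(uniformHash (Fin n))
        = (∑ j ∈ supp a ∩ supp b, (a j) ^ 2 * (b j) ^ 2) / ((supp a ∪ supp b).card : ℝ))
    ∧ ProbabilityTheory.variance (Zuw a b (supp a) (supp b) hA hB) (uniformHash (Fin n))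
        ≤ c ^ 4 * ((supp a ∩ supp b).card : ℝ) / ((supp a ∪ supp b).card : ℝ) := by
  have key : ∫ h, (Zuw a b (supp a) (supp b) hA hB h) ^ 2 ∂(uniformHash (Fin n))
        = (∑ j ∈ supp a ∩ supp b, (a j) ^ 2 * (b j) ^ 2) / ((supp a ∪ supp b).card : ℝ) := by
    have h1 : ∫ h, (Zuw a b (supp a) (supp b) hA hB h) ^ 2 ∂(uniformHash (Fin n))
        = ∫ h, ∑ j ∈ supp a ∩ supp b, (EvMin (supp a ∪ supp b) j).indicator
            (fun _ => (a j * b j) ^ 2) h ∂(uniformHash (Fin n)) := by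
      apply integral_congr_ae
      filter_upwards [ae_injective] with h hh
      exact Zuw_eq a b _ _ hA hB h hh (fun x => x ^ 2) (by simp)
    rw [h1, integral_finsetSum, Finset.sum_div]
    · refine Finset.sum_congr rfl fun j hj => ?_
      rw [integral_indicator_const _ (measurableSet_EvMin _ j),
        EvMin_prob _ (Finset.mem_union_left _ (Finset.mem_inter.1 hj).1), smul_eq_mul]
      ring
    · intro k _
      exact (integrable_const _).indicator (measurableSet_EvMin _ k)
  refine ⟨key, ?_⟩
  have hmeas : AEStronglyMeasurable (Zuw a b (supp a) (supp b) hA hB) (uniformHash (Fin n)) := by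
    refine ⟨fun h => ∑ j ∈ supp a ∩ supp b, (EvMin (supp a ∪ supp b) j).indicator
            (fun _ => a j * b j) h, ?_, ?_⟩
    · exact (Finset.measurable_sum _ fun j _ =>
        measurable_const.indicator (measurableSet_EvMin _ j)).stronglyMeasurable
    · filter_upwards [ae_injective] with h hh
      exact Zuw_eq a b _ _ hA hB h hh (fun x => x) rfl
  refine (ProbabilityTheory.variance_le_expectation_sq hmeas).trans ?_
  have key' : ∫ h, ((Zuw a b (supp a) (supp b) hA hB) ^ 2) h ∂(uniformHash (Fin n)) = _ := key
  rw [key']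
  gcongr
  calc ∑ j ∈ supp a ∩ supp b, (a j) ^ 2 * (b j) ^ 2
      ≤ ∑ j ∈ supp a ∩ supp b, c ^ 4 := by
        refine Finset.sum_le_sum fun j _ => ?_
        have h1 : a j ^ 2 ≤ c ^ 2 := sq_le_sq' (abs_le.1 (ha j)).1 (abs_le.1 (ha j)).2
        have h2 : b j ^ 2 ≤ c ^ 2 := sq_le_sq' (abs_le.1 (hb j)).1 (abs_le.1 (hb j)).2
        calc a j ^ 2 * b j ^ 2 ≤ c ^ 2 * c ^ 2 := by gcongr
          _ = c ^ 4 := by ring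
    _ = c ^ 4 * ((supp a ∩ supp b).card : ℝ) := by
        rw [Finset.sum_const, nsmul_eq_mul, mul_comm]
end
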